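/- For all t > 0 and x ∈ ℝ, ∫_{C_W} w(1) exp(−t ∫₀¹ (x + √(2t) w(s))² ds) dm_W(w) = (x(1 − cosh(2t))/(√(2t) cosh(2t))) · k(t,x), where k(t,x) = cosh(2t)^{−1/2} exp(−(1/2)(sinh(2t)/cosh(2t)) x²). -/

import Mathlib

/-! The integral is a Feynman–Kac expectation for the harmonic oscillator: with `X = x + √(2t) w` it is
`E[(X₁ - x) / √(2t) * exp (-t ∫ X²)]`, and the oscillator semigroup is given by Mehler's kernel.
The proof uses a discretisation that is exactly solvable for every mesh.

Replace `t ∫₀¹ X²` by `c` times a trapezoidal sum over the grid `i / (n + 1)`. One step of the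
resulting Gaussian integral has kernel
`exp (-c Y² / 2) exp (-(Y - Z)² / (4δ)) exp (-c Z² / 2)` with `δ = t / (n + 1)`. For
`c = (cosh θ - 1) / (2δ)` this is a multiple of the Mehler kernel at time `θ`, so it maps
`(a + b z) exp (-m tanh φ z² / 2)` to a function of the same form with `φ + θ` in place of `φ`, where
`m = sinh θ / (2δ)` (`integral_step`). Iterating (`integral_path`) and choosing `θ = 2δ`, the total
Mehler time is `2t` for every `n`, and the discretised Wiener integral is the claimed right-hand side
except for the factor `m` in the exponent (`integral_discrete`).

As `n → ∞`, `m → 1` and `c (n + 1) = t (sinh δ / δ)² → t`, so the discretised functional converges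
to `t ∫₀¹ X²` along every path (`tendsto_trapSum`). Since it is nonnegative, dominated convergence
with bound `|w 1|` (`integrable_eval_one`) finishes the proof.
-/

open MeasureTheory Real Filter Topology

noncomputable section


/-- The classical Wiener space: continuous functions on `[0,1]` vanishing at `0`. -/
def CW : Type := {w : C(Set.Icc (0:ℝ) 1, ℝ) // w ⟨0, by norm_num⟩ = 0}

instance : TopologicalSpace CW := by unfold CW; infer_instance
instance : MeasurableSpace CW := borel CW

/-- Evaluation of an element of the Wiener space at a time `s` (clamped to `[0,1]`). -/
def CW.eval (w : CW) (s : ℝ) : ℝ := w.1 (Set.projIcc (0:ℝ) 1 zero_le_one s)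

/-- The value preceding index `i`, with the convention that it is `0` for `i = 0`. -/
def prevVal {n : ℕ} (v : Fin n → ℝ) (i : Fin n) : ℝ :=
  if h : (i : ℕ) = 0 then 0 else v ⟨(i : ℕ) - 1, by have := i.isLt; omega⟩

/-- The normal (Gaussian) density of the finite-dimensional distributions of Brownian
motion at times `t 0 < t 1 < ⋯ < t (n-1)`. -/
def normalDensity {n : ℕ} (t : Fin n → ℝ) (ξ : Fin n → ℝ) : ℝ :=
  (Real.sqrt ((2 * π) ^ n * ∏ i, (t i - prevVal t i)))⁻¹ *
    Real.exp (-(1 / 2) * ∑ i, (ξ i - prevVal ξ i) ^ 2 / (t i - prevVal t i))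

/-- `μ` is the Wiener measure: a probability measure on `CW` whose finite-dimensional
distributions at times `0 < t 0 < t 1 < ⋯ < t (n-1) ≤ 1` have the normal density. -/
structure IsWienerMeasure (μ : Measure CW) : Prop where
  prob : IsProbabilityMeasure μ
  fdd : ∀ (n : ℕ) (t : Fin n → ℝ), StrictMono t → (∀ i, 0 < t i) → (∀ i, t i ≤ 1) →
    Measure.map (fun (w : CW) (i : Fin n) => w.eval (t i)) μ =
      MeasureTheory.volume.withDensity (fun ξ => ENNReal.ofReal (normalDensity t ξ))

/-- The Feynman–Kac type integral of the paper:
`S(v₀,c)(t,x) = ∫_{C_W} v₀(√(2t) w(1)+x) exp(−t∫₀¹ (x+√(2t)w(s))² ds)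
  exp(−t∫₀¹ c(t(1−s), √(2t)w(s)+x) ds) dm_W(w)`. -/
def wienerFK (μ : Measure CW) (v₀ : ℝ → ℝ) (c : ℝ → ℝ → ℝ) (t x : ℝ) : ℝ :=
  ∫ w : CW,
    v₀ (Real.sqrt (2 * t) * w.eval 1 + x) *
      Real.exp (-(t * ∫ s in (0:ℝ)..1, (x + Real.sqrt (2 * t) * w.eval s) ^ 2)) *
      Real.exp (-(t * ∫ s in (0:ℝ)..1,
        c (t * (1 - s)) (Real.sqrt (2 * t) * w.eval s + x))) ∂μ


/-! ### The discretised oscillator in closed form -/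

lemma integral_affine_mul_exp (a b r : ℝ) {p : ℝ} (hp : 0 < p) :
    ∫ z : ℝ, (a + b * z) * exp (-p * z ^ 2 + r * z) =
      √(π / p) * (a + b * (r / (2 * p))) * exp (r ^ 2 / (4 * p)) := by
  have hodd : ∫ z : ℝ, z * exp (-p * z ^ 2) = 0 := by
    have h := integral_neg_eq_self (fun z : ℝ => z * exp (-p * z ^ 2)) volume
    simp only [neg_sq, neg_mul, integral_neg] at h ⊢
    linarith
  -- completing the square: the integrand is centred at `r / (2p)`
  rw [← integral_add_right_eq_self _ (r / (2 * p))]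
  have : ∀ z : ℝ, (a + b * (z + r / (2 * p))) *
      exp (-p * (z + r / (2 * p)) ^ 2 + r * (z + r / (2 * p))) =
      ((a + b * (r / (2 * p))) * exp (r ^ 2 / (4 * p))) * exp (-p * z ^ 2) +
      (b * exp (r ^ 2 / (4 * p))) * (z * exp (-p * z ^ 2)) := by
    intro z
    have : -p * (z + r / (2 * p)) ^ 2 + r * (z + r / (2 * p)) =
        r ^ 2 / (4 * p) + -p * z ^ 2 := by
      field_simp
      ring
    rw [this, exp_add]
    ring
  simp_rw [this]
  rw [integral_add ((integrable_exp_neg_mul_sq hp).const_mul _)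
    ((integrable_mul_exp_neg_mul_sq hp).const_mul _), integral_const_mul, integral_const_mul,
    hodd, integral_gaussian]
  ring

/-- The exponent of one step of the discretised problem: half a time step of the potential at each
end point, together with the exponent of the heat kernel at time `δ` for the generator `d²/dx²`;
the kernel is `exp (-stepQ c δ Y Z)`, up to normalisation. -/
def stepQ (c δ Y Z : ℝ) : ℝ := c / 2 * (Y ^ 2 + Z ^ 2) + (Y - Z) ^ 2 / (4 * δ)

/-- With `c = (cosh θ - 1) / (2δ)` the step kernel `exp (-stepQ c δ)` is a multiple of the Mehler
kernel at time `θ`, so it acts on the family `z ↦ (a + b z) exp (-m tanh φ z² / 2)` by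
`φ ↦ φ + θ`. -/
lemma integral_step (a b θ φ Y : ℝ) {δ : ℝ} (hδ : 0 < δ) :
    ∫ Z : ℝ, exp (-stepQ ((cosh θ - 1) / (2 * δ)) δ Y Z) *
      ((a + b * Z) * exp (-(1 / 2) * (sinh θ / (2 * δ)) * (sinh φ / cosh φ) * Z ^ 2)) =
      √(4 * π * δ) * √(cosh φ) / √(cosh (φ + θ)) * (a + b * (cosh φ / cosh (φ + θ)) * Y) *
        exp (-(1 / 2) * (sinh θ / (2 * δ)) * (sinh (φ + θ) / cosh (φ + θ)) * Y ^ 2) := by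
  have h1 := cosh_pos φ
  have h2 := cosh_pos (φ + θ)
  have h4 : cosh θ * cosh φ + sinh θ * sinh φ = cosh (φ + θ) := by rw [cosh_add]; ring
  have hφ : cosh φ = cosh θ * cosh (φ + θ) - sinh θ * sinh (φ + θ) := by
    rw [cosh_add, sinh_add]
    linear_combination (-cosh φ) * cosh_sq θ
  set p := cosh (φ + θ) / (4 * δ * cosh φ) with hp
  have hp0 : 0 < p := by positivity
  have key : ∀ Z : ℝ, exp (-stepQ ((cosh θ - 1) / (2 * δ)) δ Y Z) *
      ((a + b * Z) * exp (-(1 / 2) * (sinh θ / (2 * δ)) * (sinh φ / cosh φ) * Z ^ 2)) =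
      exp (-(cosh θ / (4 * δ)) * Y ^ 2) * ((a + b * Z) * exp (-p * Z ^ 2 + Y / (2 * δ) * Z)) := by
    intro Z
    have : -stepQ ((cosh θ - 1) / (2 * δ)) δ Y Z +
        -(1 / 2) * (sinh θ / (2 * δ)) * (sinh φ / cosh φ) * Z ^ 2 =
        -(cosh θ / (4 * δ)) * Y ^ 2 + (-p * Z ^ 2 + Y / (2 * δ) * Z) := by
      rw [hp, ← h4, stepQ]
      field_simp
      ring
    have h5 := congrArg exp this
    rw [exp_add, exp_add] at h5
    linear_combination (a + b * Z) * h5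
  simp_rw [key]
  rw [integral_const_mul, integral_affine_mul_exp _ _ _ hp0]
  have e1 : √(π / p) = √(4 * π * δ) * √(cosh φ) / √(cosh (φ + θ)) := by
    rw [← sqrt_mul (by positivity), ← sqrt_div (by positivity), hp]
    congr 1
    field_simp
  have e2 : Y / (2 * δ) / (2 * p) = cosh φ / cosh (φ + θ) * Y := by
    rw [hp]; field_simp; norm_num
  have e3 : -(1 / 2) * (sinh θ / (2 * δ)) * (sinh (φ + θ) / cosh (φ + θ)) * Y ^ 2 =
      -(cosh θ / (4 * δ)) * Y ^ 2 + (Y / (2 * δ)) ^ 2 / (4 * p) := by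
    have : (Y / (2 * δ)) ^ 2 / (4 * p) = Y ^ 2 / (4 * δ) * (cosh φ / cosh (φ + θ)) := by
      rw [hp]; field_simp; norm_num
    rw [this, hφ]
    field_simp
    ring
  rw [e1, e2, e3, exp_add]
  ring

/-- The weight of the discrete path `u` is `exp (-pathQ c δ σ x u)`, where the oscillator coordinate
is `X = x + σ u`. The starting point `u 0` is an entry of `u`. -/
def pathQ (c δ σ x : ℝ) {n : ℕ} (u : Fin (n + 1) → ℝ) : ℝ :=
  ∑ i : Fin n, stepQ c δ (x + σ * u i.castSucc) (x + σ * u i.succ)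

lemma pathQ_cons (c δ σ x y z : ℝ) {n : ℕ} (ζ : Fin n → ℝ) :
    pathQ c δ σ x (Fin.cons y (Fin.cons z ζ : Fin (n + 1) → ℝ) : Fin (n + 2) → ℝ) =
      stepQ c δ (x + σ * y) (x + σ * z) + pathQ c δ σ x (Fin.cons z ζ : Fin (n + 1) → ℝ) := by
  unfold pathQ
  rw [Fin.sum_univ_succ]
  simp

/-- The integrand is dominated by a product of one-dimensional integrable functions, because each
coordinate carries half a step of the confining potential. -/
lemma integrable_path (a b x y : ℝ) {c δ σ : ℝ} (hc : 0 < c) (hδ : 0 < δ) (hσ : 0 < σ) (n : ℕ) :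
    Integrable (fun ξ : Fin n → ℝ =>
      (a + b * (x + σ * (Fin.cons y ξ : Fin (n + 1) → ℝ) (Fin.last n))) *
        exp (-pathQ c δ σ x (Fin.cons y ξ : Fin (n + 1) → ℝ))) := by
  cases n with
  | zero =>
    have : (fun ξ : Fin 0 → ℝ =>
      (a + b * (x + σ * (Fin.cons y ξ : Fin 1 → ℝ) (Fin.last 0))) *
        exp (-pathQ c δ σ x (Fin.cons y ξ : Fin 1 → ℝ))) = fun _ => a + b * (x + σ * y) := by
      ext ξ
      simp [pathQ]
    rw [this]
    have : IsFiniteMeasure (volume : Measure (Fin 0 → ℝ)) := by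
      rw [volume_pi]; infer_instance
    exact integrable_const _
  | succ n =>
    set f : ℝ → ℝ := fun s => (1 + |a| + |b| * |x + σ * s|) * exp (-(c / 2) * (x + σ * s) ^ 2)
      with hf
    have hfi : Integrable f := by
      have h0 : Integrable (fun X : ℝ => (1 + |a| + |b| * |X|) * exp (-(c / 2) * X ^ 2)) := by
        have e1 := (integrable_exp_neg_mul_sq (half_pos hc)).const_mul (1 + |a|)
        have e2 := (integrable_mul_exp_neg_mul_sq (half_pos hc)).norm.const_mul |b|
        refine (e1.add e2).congr (ae_of_all _ fun X => ?_)
        simp only [Pi.add_apply, norm_mul, norm_eq_abs, abs_exp]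
        ring
      exact ((h0.comp_add_left x).comp_mul_left' hσ.ne')
    have hprod : Integrable (fun ξ : Fin (n + 1) → ℝ => ∏ i, f (ξ i)) :=
      Integrable.fintype_prod (f := fun _ => f) fun _ => hfi
    refine hprod.mono' ?_ (ae_of_all _ fun ξ => ?_)
    · refine Continuous.aestronglyMeasurable ?_
      have hcons : Continuous fun ξ : Fin (n + 1) → ℝ => (Fin.cons y ξ : Fin (n + 2) → ℝ) :=
        continuous_const.finCons continuous_id
      have hi : ∀ i, Continuous fun ξ : Fin (n + 1) → ℝ => (Fin.cons y ξ : Fin (n + 2) → ℝ) i :=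
        fun i => (continuous_apply i).comp hcons
      unfold pathQ stepQ
      fun_prop
    · rw [norm_mul, norm_eq_abs, norm_eq_abs, abs_exp, hf, Finset.prod_mul_distrib, ← exp_sum]
      have hl : (Fin.cons y ξ : Fin (n + 2) → ℝ) (Fin.last (n + 1)) = ξ (Fin.last n) := by
        rw [← Fin.succ_last, Fin.cons_succ]
      rw [hl]
      refine mul_le_mul ?_ (exp_le_exp.2 ?_) (exp_pos _).le
        (Finset.prod_nonneg fun i _ => by positivity)
      · calc |a + b * (x + σ * ξ (Fin.last n))| ≤ 1 + |a| + |b| * |x + σ * ξ (Fin.last n)| := by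
              have := abs_add_le a (b * (x + σ * ξ (Fin.last n)))
              rw [abs_mul] at this
              linarith
          _ = ∏ i : Fin (n + 1), (if i = Fin.last n then
                1 + |a| + |b| * |x + σ * ξ (Fin.last n)| else 1) := by simp
          _ ≤ _ := by
              refine Finset.prod_le_prod (fun i _ => by split_ifs <;> positivity) fun i _ => ?_
              split_ifs with h
              · rw [h]
              · have : 0 ≤ |a| + |b| * |x + σ * ξ i| := by positivity
                linarith
      · unfold pathQ
        rw [← Finset.sum_neg_distrib]
        refine Finset.sum_le_sum fun i _ => ?_
        simp only [stepQ, Fin.cons_succ]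
        have h1 : 0 ≤ c / 2 * (x + σ * (Fin.cons y ξ : Fin (n + 2) → ℝ) i.castSucc) ^ 2 := by
          positivity
        have h2 : 0 ≤ (x + σ * (Fin.cons y ξ : Fin (n + 2) → ℝ) i.castSucc - (x + σ * ξ i)) ^ 2 /
          (4 * δ) := by positivity
        linarith

lemma integral_comp_affine (x σ : ℝ) (hσ : 0 < σ) (g : ℝ → ℝ) :
    ∫ z : ℝ, g (x + σ * z) = σ⁻¹ * ∫ Z, g Z := by
  rw [Measure.integral_comp_mul_left (fun u => g (x + u)) σ, integral_add_left_eq_self g x,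
    abs_of_pos (inv_pos.2 hσ), smul_eq_mul]

/-- The discretised harmonic-oscillator integral in closed form, for paths starting at `y`. Peeling off the first coordinate,
each integration is one application of `integral_step`. -/
lemma integral_path (a b x : ℝ) {θ δ σ : ℝ} (hθ : θ ≠ 0) (hδ : 0 < δ) (hσ : 0 < σ) (n : ℕ)
    (y : ℝ) :
    ∫ ξ : Fin n → ℝ, (a + b * (x + σ * (Fin.cons y ξ : Fin (n + 1) → ℝ) (Fin.last n))) *
        exp (-pathQ ((cosh θ - 1) / (2 * δ)) δ σ x (Fin.cons y ξ : Fin (n + 1) → ℝ)) =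
      (σ⁻¹ * √(4 * π * δ)) ^ n * (√(cosh (n * θ)))⁻¹ *
        ((a + b * (cosh (n * θ))⁻¹ * (x + σ * y)) *
        exp (-(1 / 2) * (sinh θ / (2 * δ)) * (sinh (n * θ) / cosh (n * θ)) * (x + σ * y) ^ 2)) := by
  have hc : 0 < (cosh θ - 1) / (2 * δ) := by
    have := one_lt_cosh.2 hθ
    have : 0 < cosh θ - 1 := by linarith
    positivity
  induction n generalizing y with
  | zero =>
    simp [pathQ, volume_pi, Measure.real]
  | succ n ih =>
    have hint := integrable_path a b x y hc hδ hσ (n + 1)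
    have mp := (volume_preserving_piFinSuccAbove (fun _ : Fin (n + 1) => ℝ) 0).symm
    have happ : ∀ q : ℝ × (Fin n → ℝ),
        (MeasurableEquiv.piFinSuccAbove (fun _ : Fin (n + 1) => ℝ) 0).symm q
          = (Fin.cons q.1 q.2 : Fin (n + 1) → ℝ) := by
      intro q
      simp [MeasurableEquiv.piFinSuccAbove]
      rfl
    rw [← mp.integral_comp']
    have hint' := (mp.integrable_comp_emb (MeasurableEquiv.measurableEmbedding _)).2 hint
    simp only [Function.comp_def, happ] at hint' ⊢
    rw [Measure.volume_eq_prod] at hint' ⊢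
    rw [integral_prod _ hint']
    have hl : ∀ (z : ℝ) (ζ : Fin n → ℝ),
        (Fin.cons y (Fin.cons z ζ : Fin (n + 1) → ℝ) : Fin (n + 2) → ℝ) (Fin.last (n + 1)) =
        (Fin.cons z ζ : Fin (n + 1) → ℝ) (Fin.last n) := by
      intro z ζ
      rw [← Fin.succ_last, Fin.cons_succ]
    simp only [hl, pathQ_cons, neg_add, exp_add]
    have inner : ∀ z : ℝ, ∫ ζ : Fin n → ℝ,
        (a + b * (x + σ * (Fin.cons z ζ : Fin (n + 1) → ℝ) (Fin.last n))) *
          (exp (-stepQ ((cosh θ - 1) / (2 * δ)) δ (x + σ * y) (x + σ * z)) *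
            exp (-pathQ ((cosh θ - 1) / (2 * δ)) δ σ x (Fin.cons z ζ : Fin (n + 1) → ℝ))) =
        (σ⁻¹ * √(4 * π * δ)) ^ n * (√(cosh (n * θ)))⁻¹ *
        (exp (-stepQ ((cosh θ - 1) / (2 * δ)) δ (x + σ * y) (x + σ * z)) *
        ((a + b * (cosh (n * θ))⁻¹ * (x + σ * z)) *
        exp (-(1 / 2) * (sinh θ / (2 * δ)) * (sinh (n * θ) / cosh (n * θ)) *
          (x + σ * z) ^ 2))) := by
      intro z
      simp only [mul_left_comm _ (exp (-stepQ _ _ _ _)) _]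
      rw [integral_const_mul, ih z, mul_left_comm]
    simp_rw [inner]
    rw [integral_const_mul, integral_comp_affine x σ hσ (fun Z =>
      exp (-stepQ ((cosh θ - 1) / (2 * δ)) δ (x + σ * y) Z) * ((a + b * (cosh (n * θ))⁻¹ * Z) *
        exp (-(1 / 2) * (sinh θ / (2 * δ)) * (sinh (n * θ) / cosh (n * θ)) * Z ^ 2))),
      integral_step _ _ _ _ _ hδ]
    have h3 : n * θ + θ = ((n + 1 : ℕ) : ℝ) * θ := by push_cast; ring
    rw [h3]
    have h1 := cosh_pos (n * θ)
    have h2 := cosh_pos (((n + 1 : ℕ) : ℝ) * θ)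
    have h5 : (√(cosh (n * θ))) ≠ 0 := (sqrt_pos.2 h1).ne'
    rw [pow_succ (σ⁻¹ * √(4 * π * δ)) n]
    generalize (σ⁻¹ * √(4 * π * δ)) ^ n = K
    field_simp

/-! ### Convergence of the discretisation -/

lemma tendsto_sinh_div {a : ℝ} (ha : 0 < a) :
    Tendsto (fun n : ℕ => sinh (a / ((n : ℝ) + 1)) / (a / ((n : ℝ) + 1))) atTop (𝓝 1) := by
  have h1 : Tendsto (fun n : ℕ => a / ((n : ℝ) + 1)) atTop (𝓝[≠] 0) := by
    refine tendsto_nhdsWithin_iff.2 ⟨?_, Eventually.of_forall fun n => ?_⟩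
    · simpa [div_eq_mul_inv] using (tendsto_one_div_add_atTop_nhds_zero_nat (𝕜 := ℝ)).const_mul a
    · have : 0 < a / ((n : ℝ) + 1) := by positivity
      exact this.ne'
  have h2 := (hasDerivAt_sinh 0).tendsto_slope
  rw [cosh_zero] at h2
  refine (h2.comp h1).congr fun n => ?_
  simp [slope_def_field]

/-- The composite trapezoidal sum of `f` over `n + 1` equal intervals of `[0, 1]`, without the mesh
factor `1 / (n + 1)`. -/
def trapSum (f : ℝ → ℝ) (n : ℕ) : ℝ :=
  ∑ i : Fin (n + 1), (f ((i : ℕ) / ((n : ℝ) + 1)) + f (((i : ℕ) + 1) / ((n : ℝ) + 1))) / 2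

lemma tendsto_trapSum {f : ℝ → ℝ} (hf : Continuous f) :
    Tendsto (fun n : ℕ => trapSum f n / ((n : ℝ) + 1)) atTop (𝓝 (∫ s in (0:ℝ)..1, f s)) := by
  have huc := isCompact_Icc.uniformContinuousOn_of_continuous (hf.continuousOn (s := Set.Icc 0 1))
  rw [Metric.uniformContinuousOn_iff] at huc
  rw [Metric.tendsto_atTop]
  intro ε hε
  obtain ⟨η, hη, H⟩ := huc (ε / 2) (half_pos hε)
  obtain ⟨M, hM⟩ := exists_nat_one_div_lt hη
  refine ⟨M, fun n hn => ?_⟩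
  have hN : (0 : ℝ) < (n : ℝ) + 1 := by positivity
  have hnη : 1 / ((n : ℝ) + 1) < η := lt_of_le_of_lt
    (one_div_le_one_div_of_le (by positivity) (by have : (M : ℝ) ≤ n := by exact_mod_cast hn
                                                  linarith)) hM
  have hint : ∀ u v : ℝ, IntervalIntegrable f volume u v := fun u v => hf.intervalIntegrable u v
  have hsplit : ∫ s in (0:ℝ)..1, f s = ∑ i : Fin (n + 1),
      ∫ s in ((i : ℕ) / ((n : ℝ) + 1))..(((i : ℕ) + 1) / ((n : ℝ) + 1)), f s := by
    have := intervalIntegral.sum_integral_adjacent_intervals (f := f) (μ := volume)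
      (a := fun k : ℕ => (k : ℝ) / ((n : ℝ) + 1)) (n := n + 1) (fun k _ => hint _ _)
    rw [← Fin.sum_univ_eq_sum_range (fun k => ∫ s in
      ((k : ℝ) / ((n : ℝ) + 1))..(((k + 1 : ℕ) : ℝ) / ((n : ℝ) + 1)), f s)] at this
    push_cast at this
    rw [this]
    simp [div_self hN.ne']
  rw [dist_eq_norm, hsplit, trapSum, Finset.sum_div, ← Finset.sum_sub_distrib]
  have hterm : ∀ i : Fin (n + 1),
      ‖(f ((i : ℕ) / ((n : ℝ) + 1)) + f (((i : ℕ) + 1) / ((n : ℝ) + 1))) / 2 / ((n : ℝ) + 1) -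
      ∫ s in ((i : ℕ) / ((n : ℝ) + 1))..(((i : ℕ) + 1) / ((n : ℝ) + 1)), f s‖ ≤
      ε / 2 * (1 / ((n : ℝ) + 1)) := by
    intro i
    set p := ((i : ℕ) : ℝ) / ((n : ℝ) + 1) with hp
    set q := (((i : ℕ) : ℝ) + 1) / ((n : ℝ) + 1) with hq
    have hpq : q - p = 1 / ((n : ℝ) + 1) := by rw [hp, hq]; ring
    have hpos : 0 < 1 / ((n : ℝ) + 1) := by positivity
    have hp0 : 0 ≤ p := by positivity
    have hq1 : q ≤ 1 := by
      rw [hq, div_le_one hN]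
      have : ((i : ℕ) : ℝ) ≤ n := by exact_mod_cast Nat.lt_succ_iff.1 i.2
      linarith
    have : (f p + f q) / 2 / ((n : ℝ) + 1) - ∫ s in p..q, f s =
        ∫ s in p..q, ((f p + f q) / 2 - f s) := by
      rw [intervalIntegral.integral_sub (by simp) (hint _ _), intervalIntegral.integral_const,
        hpq, smul_eq_mul]
      ring
    rw [this]
    refine (intervalIntegral.norm_integral_le_of_norm_le_const (C := ε / 2) fun s hs => ?_).trans ?_
    · rw [Set.uIoc_of_le (by linarith)] at hs
      have hs1 := hs.1
      have hs2 := hs.2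
      have a1 := H p ⟨hp0, by linarith⟩ s ⟨by linarith, by linarith⟩ (by
        rw [Real.dist_eq, abs_lt]; constructor <;> linarith)
      have a2 := H q ⟨by linarith, hq1⟩ s ⟨by linarith, by linarith⟩ (by
        rw [Real.dist_eq, abs_lt]; constructor <;> linarith)
      rw [Real.dist_eq, abs_lt] at a1 a2
      rw [norm_eq_abs, abs_le]
      constructor <;> linarith [a1.1, a1.2, a2.1, a2.2]
    · rw [hpq, abs_of_pos hpos]
  refine (norm_sum_le _ _).trans_lt ((Finset.sum_le_sum fun i _ => hterm i).trans_lt ?_)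
  rw [Finset.sum_const, Finset.card_univ, Fintype.card_fin, nsmul_eq_mul]
  push_cast
  field_simp
  linarith

/-! ### Wiener measure on a uniform grid -/

instance : BorelSpace CW := ⟨rfl⟩

lemma continuous_eval_left (s : ℝ) : Continuous fun w : CW => w.eval s :=
  (continuous_eval_const (Set.projIcc (0:ℝ) 1 zero_le_one s)).comp
    continuous_subtype_val

lemma continuous_eval_right (w : CW) : Continuous w.eval :=
  w.1.continuous.comp continuous_projIcc

lemma eval_zero (w : CW) : w.eval 0 = 0 := by
  have : Set.projIcc (0:ℝ) 1 zero_le_one 0 = ⟨0, by norm_num⟩ :=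
    Set.projIcc_of_mem zero_le_one (by norm_num)
  rw [CW.eval, this]
  exact w.2

/-- The uniform grid `1/(n+1), 2/(n+1), …, 1`. -/
def grid (n : ℕ) (i : Fin (n + 1)) : ℝ := ((i : ℕ) + 1) / ((n : ℝ) + 1)

/-- The convention `prevVal v 0 = 0` amounts to prepending the starting value `0` to `v`. -/
lemma prevVal_eq_cons {n : ℕ} (v : Fin n → ℝ) (i : Fin n) :
    prevVal v i = (Fin.cons 0 v : Fin (n + 1) → ℝ) i.castSucc := by
  obtain ⟨k, hk⟩ := i
  cases k with
  | zero =>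
    cases n with
    | zero => omega
    | succ n => simp [prevVal]
  | succ k =>
    have : (Fin.castSucc ⟨k + 1, hk⟩ : Fin (n + 1)) = Fin.succ ⟨k, by omega⟩ := rfl
    rw [this, Fin.cons_succ]
    simp [prevVal]

lemma grid_sub_prevVal (n : ℕ) (i : Fin (n + 1)) :
    grid n i - prevVal (grid n) i = 1 / ((n : ℝ) + 1) := by
  obtain ⟨k, hk⟩ := i
  cases k with
  | zero => simp [prevVal, grid]
  | succ k =>
    simp [prevVal, grid]
    ring

lemma normalDensity_grid (n : ℕ) (ξ : Fin (n + 1) → ℝ) :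
    normalDensity (grid n) ξ = (√(2 * π / ((n : ℝ) + 1)) ^ (n + 1))⁻¹ *
      exp (-∑ i : Fin (n + 1), ((n : ℝ) + 1) / 2 *
        ((Fin.cons 0 ξ : Fin (n + 2) → ℝ) i.castSucc - ξ i) ^ 2) := by
  unfold normalDensity
  simp_rw [grid_sub_prevVal, prevVal_eq_cons]
  have hN : (0 : ℝ) < (n : ℝ) + 1 := by positivity
  congr 2
  · rw [Finset.prod_const, Finset.card_univ, Fintype.card_fin, ← mul_pow, mul_one_div]
    have h : (2 * π / ((n : ℝ) + 1)) ^ (n + 1) = (√(2 * π / ((n : ℝ) + 1)) ^ (n + 1)) ^ 2 := by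
      rw [← pow_mul, mul_comm (n + 1), pow_mul, sq_sqrt (by positivity)]
    rw [h, sqrt_sq (by positivity)]
  · rw [Finset.mul_sum, ← Finset.sum_neg_distrib]
    refine Finset.sum_congr rfl fun i _ => ?_
    field_simp
    ring

lemma continuous_normalDensity_grid (n : ℕ) : Continuous (normalDensity (grid n)) := by
  have : normalDensity (grid n) = _ := funext (normalDensity_grid n)
  rw [this]
  have hcons : Continuous fun ξ : Fin (n + 1) → ℝ => (Fin.cons 0 ξ : Fin (n + 2) → ℝ) :=
    continuous_const.finCons continuous_id
  have hi : ∀ i, Continuous fun ξ : Fin (n + 1) → ℝ => (Fin.cons 0 ξ : Fin (n + 2) → ℝ) i :=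
    fun i => (continuous_apply i).comp hcons
  fun_prop

lemma map_grid {μ : Measure CW} (hμ : IsWienerMeasure μ) (n : ℕ) :
    Measure.map (fun (w : CW) (i : Fin (n + 1)) => w.eval (grid n i)) μ =
      volume.withDensity (fun ξ => ENNReal.ofReal (normalDensity (grid n) ξ)) := by
  have hN : (0 : ℝ) < (n : ℝ) + 1 := by positivity
  refine hμ.fdd (n + 1) (grid n) (fun i j hij => ?_) (fun i => ?_) (fun i => ?_)
  · have : ((i : ℕ) : ℝ) < (j : ℕ) := by exact_mod_cast hij
    unfold grid
    gcongr
  · unfold grid; positivity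
  · rw [grid, div_le_one hN]
    have : ((i : ℕ) : ℝ) ≤ n := by exact_mod_cast Nat.lt_succ_iff.1 i.2
    linarith

lemma measurable_eval_grid (n : ℕ) :
    Measurable (fun (w : CW) (i : Fin (n + 1)) => w.eval (grid n i)) :=
  measurable_pi_iff.2 fun _ => (continuous_eval_left _).measurable

lemma normalDensity_nonneg {n : ℕ} (t ξ : Fin n → ℝ) : 0 ≤ normalDensity t ξ := by
  unfold normalDensity; positivity

lemma integral_grid {μ : Measure CW} (hμ : IsWienerMeasure μ) (n : ℕ)
    {g : (Fin (n + 1) → ℝ) → ℝ} (hg : Continuous g) :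
    ∫ w, g (fun i => w.eval (grid n i)) ∂μ = ∫ ξ, normalDensity (grid n) ξ * g ξ := by
  rw [← integral_map (measurable_eval_grid n).aemeasurable hg.aestronglyMeasurable, map_grid hμ,
    integral_withDensity_eq_integral_toReal_smul
      (continuous_normalDensity_grid n).measurable.ennreal_ofReal
      (ae_of_all _ fun _ => ENNReal.ofReal_lt_top)]
  simp only [ENNReal.toReal_ofReal (normalDensity_nonneg _ _), smul_eq_mul]

/-- Brownian motion at time `1` has a finite first moment, being standard Gaussian. -/
lemma integrable_eval_one {μ : Measure CW} (hμ : IsWienerMeasure μ) :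
    Integrable (fun w : CW => w.eval 1) μ := by
  have h : Integrable (fun ξ : Fin 1 → ℝ => ξ 0)
      (Measure.map (fun (w : CW) (i : Fin 1) => w.eval (grid 0 i)) μ) := by
    rw [map_grid hμ, integrable_withDensity_iff_integrable_smul'
      (continuous_normalDensity_grid 0).measurable.ennreal_ofReal
      (ae_of_all _ fun _ => ENNReal.ofReal_lt_top)]
    simp only [ENNReal.toReal_ofReal (normalDensity_nonneg _ _), smul_eq_mul]
    simp only [normalDensity_grid]
    have := (Integrable.fintype_prod (ι := Fin 1) (f := fun _ (z : ℝ) => z * exp (-(1/2) * z ^ 2))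
      fun _ => integrable_mul_exp_neg_mul_sq (by norm_num)).const_mul (√(2 * π))⁻¹
    refine this.congr (ae_of_all _ fun ξ => ?_)
    simp
    ring_nf
  have h2 := h.comp_measurable (measurable_eval_grid 0)
  simpa [Function.comp_def, grid] using h2

/-- The closed form of the discretised Wiener integral: trapezoidal weights
`c = (cosh 2δ - 1) / (2δ)` with `δ = t / (n + 1)` make the discrete problem run for total Mehler
time exactly `2t`. -/
lemma integral_discrete {μ : Measure CW} (hμ : IsWienerMeasure μ) {t : ℝ} (ht : 0 < t) (x : ℝ)
    (n : ℕ) :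
    ∫ w : CW, w.eval 1 * exp (-((cosh (2 * (t / ((n : ℝ) + 1))) - 1) / (2 * (t / ((n : ℝ) + 1))) *
      trapSum (fun s => (x + √(2 * t) * w.eval s) ^ 2) n)) ∂μ =
    (√(cosh (2 * t)))⁻¹ * ((x * (1 - cosh (2 * t)) / (√(2 * t) * cosh (2 * t))) *
      exp (-(1 / 2) * (sinh (2 * (t / ((n : ℝ) + 1))) / (2 * (t / ((n : ℝ) + 1)))) *
        (sinh (2 * t) / cosh (2 * t)) * x ^ 2)) := by
  have hN : (0 : ℝ) < (n : ℝ) + 1 := by positivity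
  set δ := t / ((n : ℝ) + 1) with hδdef
  have hδ : 0 < δ := by positivity
  set σ := √(2 * t) with hσdef
  have hσ : 0 < σ := sqrt_pos.2 (by positivity)
  have hσ2 : σ ^ 2 = 2 * t := sq_sqrt (by positivity)
  set c := (cosh (2 * δ) - 1) / (2 * δ) with hc
  have hcons : Continuous fun ξ : Fin (n + 1) → ℝ => (Fin.cons 0 ξ : Fin (n + 2) → ℝ) :=
    continuous_const.finCons continuous_id
  have hi : ∀ i, Continuous fun ξ : Fin (n + 1) → ℝ => (Fin.cons 0 ξ : Fin (n + 2) → ℝ) i :=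
    fun i => (continuous_apply i).comp hcons
  set g : (Fin (n + 1) → ℝ) → ℝ := fun ξ => ξ (Fin.last n) * exp (-∑ i : Fin (n + 1), c / 2 *
    ((x + σ * (Fin.cons 0 ξ : Fin (n + 2) → ℝ) i.castSucc) ^ 2 + (x + σ * ξ i) ^ 2)) with hg
  have hgc : Continuous g := by rw [hg]; fun_prop
  have hpath : ∀ w : CW, w.eval 1 * exp (-(c * trapSum (fun s => (x + σ * w.eval s) ^ 2) n)) =
      g (fun i => w.eval (grid n i)) := by
    intro w
    have hcast : ∀ i : Fin (n + 1),
        (Fin.cons 0 (fun i => w.eval (grid n i)) : Fin (n + 2) → ℝ) i.castSucc =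
          w.eval ((i : ℕ) / ((n : ℝ) + 1)) := by
      intro i
      obtain ⟨k, hk⟩ := i
      cases k with
      | zero => simp [eval_zero]
      | succ k =>
        have : (Fin.castSucc ⟨k + 1, hk⟩ : Fin (n + 2)) = Fin.succ ⟨k, by omega⟩ := rfl
        rw [this, Fin.cons_succ]
        simp [grid]
    simp only [hg, hcast]
    have h1 : grid n (Fin.last n) = 1 := by simp [grid, div_self hN.ne']
    rw [h1, trapSum, Finset.mul_sum]
    congr 3
    refine Finset.sum_congr rfl fun i _ => ?_
    rw [grid]
    ring
  simp_rw [hpath]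
  rw [integral_grid hμ n hgc]
  -- `ξ = (X - x) / σ` puts the factor `w 1` into the affine form required by `integral_path`
  have hdens : ∀ ξ : Fin (n + 1) → ℝ, normalDensity (grid n) ξ * g ξ =
      (√(2 * π / ((n : ℝ) + 1)) ^ (n + 1))⁻¹ *
      ((-x / σ + σ⁻¹ * (x + σ * (Fin.cons 0 ξ : Fin (n + 2) → ℝ) (Fin.last (n + 1)))) *
        exp (-pathQ c δ σ x (Fin.cons 0 ξ : Fin (n + 2) → ℝ))) := by
    intro ξ
    have h1 : (Fin.cons 0 ξ : Fin (n + 2) → ℝ) (Fin.last (n + 1)) = ξ (Fin.last n) := by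
      rw [← Fin.succ_last, Fin.cons_succ]
    have h2 : -x / σ + σ⁻¹ * (x + σ * ξ (Fin.last n)) = ξ (Fin.last n) := by
      field_simp
      ring
    have h3 : -pathQ c δ σ x (Fin.cons 0 ξ : Fin (n + 2) → ℝ) =
        (-∑ i : Fin (n + 1), ((n : ℝ) + 1) / 2 *
          ((Fin.cons 0 ξ : Fin (n + 2) → ℝ) i.castSucc - ξ i) ^ 2) +
        (-∑ i : Fin (n + 1), c / 2 *
          ((x + σ * (Fin.cons 0 ξ : Fin (n + 2) → ℝ) i.castSucc) ^ 2 + (x + σ * ξ i) ^ 2)) := by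
      rw [pathQ, ← neg_add, ← Finset.sum_add_distrib]
      congr 1
      refine Finset.sum_congr rfl fun i _ => ?_
      rw [stepQ, Fin.cons_succ, add_comm]
      congr 1
      -- `σ² = 2t` and `δ = t / (n + 1)` turn the heat kernel at time `δ` into Brownian increments
      have : ∀ u v : ℝ, (x + σ * u - (x + σ * v)) ^ 2 / (4 * δ) =
          σ ^ 2 * (u - v) ^ 2 / (4 * δ) := fun u v => by ring
      rw [this, hσ2, hδdef]
      field_simp
      ring
    rw [h1, h2, h3, exp_add, normalDensity_grid, hg]
    ring
  simp_rw [hdens]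
  rw [integral_const_mul, hc, integral_path _ _ _ (by positivity) hδ hσ]
  have e1 : ((n + 1 : ℕ) : ℝ) * (2 * δ) = 2 * t := by
    rw [hδdef]; push_cast; field_simp
  have e2 : σ⁻¹ * √(4 * π * δ) = √(2 * π / ((n : ℝ) + 1)) := by
    rw [hσdef, ← sqrt_inv, ← sqrt_mul (by positivity), hδdef]
    congr 1
    field_simp
    norm_num
  have e3 : √(2 * π / ((n : ℝ) + 1)) ^ (n + 1) ≠ 0 :=
    pow_ne_zero _ (sqrt_pos.2 (by positivity)).ne'
  have hch := cosh_pos (2 * t)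
  have e4 : -x / σ + σ⁻¹ * (cosh (2 * t))⁻¹ * x = x * (1 - cosh (2 * t)) / (σ * cosh (2 * t)) := by
    field_simp
    ring
  rw [e1, e2, mul_zero, add_zero, e4, mul_assoc (_ ^ _), inv_mul_cancel_left₀ e3]

/-- **Corollary (explicit Wiener integral, `v₀ = x`).** For all `t > 0` and `x ∈ ℝ`,
`∫_{C_W} w(1) exp(−t∫₀¹ (x+√(2t)w(s))² ds) dm_W(w)
  = (x(1−cosh 2t)/(√(2t) cosh 2t)) k(t,x)`,
where `k(t,x) = cosh(2t)^{−1/2} exp(−(1/2) tanh(2t) x²)`. -/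
theorem wiener_integral_w1
    (μ : Measure CW) (hμ : IsWienerMeasure μ) :
    ∀ t > (0:ℝ), ∀ x : ℝ,
      (∫ w : CW, w.eval 1 *
        Real.exp (-(t * ∫ s in (0:ℝ)..1, (x + Real.sqrt (2 * t) * w.eval s) ^ 2)) ∂μ) =
      (x * (1 - Real.cosh (2 * t)) / (Real.sqrt (2 * t) * Real.cosh (2 * t))) *
        ((Real.sqrt (Real.cosh (2 * t)))⁻¹ *
          Real.exp (-(1 / 2) * (Real.sinh (2 * t) / Real.cosh (2 * t)) * x ^ 2)) := by
  intro t ht x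
  have := hμ.prob
  set δ : ℕ → ℝ := fun n => t / ((n : ℝ) + 1) with hδdef
  have hδ : ∀ n, 0 < δ n := fun n => by simp only [hδdef]; positivity
  set c : ℕ → ℝ := fun n => (cosh (2 * δ n) - 1) / (2 * δ n) with hcdef
  have hc0 : ∀ n, 0 ≤ c n := fun n =>
    div_nonneg (sub_nonneg.2 (one_le_cosh _)) (by linarith [hδ n])
  -- the weights `c n` are asymptotic to the mesh `t / (n + 1)`, since `cosh 2δ - 1 = 2 sinh² δ`
  have hc : Tendsto (fun n : ℕ => c n * ((n : ℝ) + 1)) atTop (𝓝 t) := by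
    have h := ((tendsto_sinh_div ht).pow 2).const_mul t
    rw [one_pow, mul_one] at h
    refine h.congr fun n => ?_
    have h1 : cosh (2 * δ n) - 1 = 2 * sinh (δ n) ^ 2 := by
      rw [cosh_two_mul, cosh_sq]; ring
    simp only [hcdef, h1]
    simp only [hδdef]
    field_simp
  have hm : Tendsto (fun n : ℕ => sinh (2 * δ n) / (2 * δ n)) atTop (𝓝 1) := by
    refine (tendsto_sinh_div (a := 2 * t) (by positivity)).congr fun n => ?_
    simp only [hδdef, mul_div_assoc]
  have hcont : ∀ w : CW, Continuous fun s => (x + √(2 * t) * w.eval s) ^ 2 := fun w => by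
    have := continuous_eval_right w
    fun_prop
  have hlim : Tendsto (fun n : ℕ => ∫ w : CW, w.eval 1 *
      exp (-(c n * trapSum (fun s => (x + √(2 * t) * w.eval s) ^ 2) n)) ∂μ) atTop
      (𝓝 (∫ w : CW, w.eval 1 *
        exp (-(t * ∫ s in (0:ℝ)..1, (x + √(2 * t) * w.eval s) ^ 2)) ∂μ)) := by
    refine tendsto_integral_of_dominated_convergence (fun w => |w.eval 1|) (fun n => ?_)
      (integrable_eval_one hμ).abs (fun n => ae_of_all _ fun w => ?_) (ae_of_all _ fun w => ?_)
    · have := continuous_eval_left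
      unfold trapSum
      exact (by fun_prop : Continuous _).aestronglyMeasurable
    · rw [norm_mul, norm_eq_abs, norm_eq_abs, abs_exp]
      refine mul_le_of_le_one_right (abs_nonneg _) (exp_le_one_iff.2 (neg_nonpos.2 ?_))
      exact mul_nonneg (hc0 n) (Finset.sum_nonneg fun i _ => by positivity)
    · refine Tendsto.const_mul _ ((continuous_exp.tendsto _).comp (Tendsto.neg ?_))
      refine (hc.mul (tendsto_trapSum (hcont w))).congr fun n => ?_
      have hN : (n : ℝ) + 1 ≠ 0 := by positivity
      field_simp
  have hlim2 : Tendsto (fun n : ℕ => (√(cosh (2 * t)))⁻¹ *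
      ((x * (1 - cosh (2 * t)) / (√(2 * t) * cosh (2 * t))) *
      exp (-(1 / 2) * (sinh (2 * δ n) / (2 * δ n)) *
        (sinh (2 * t) / cosh (2 * t)) * x ^ 2))) atTop (𝓝 ((√(cosh (2 * t)))⁻¹ *
      ((x * (1 - cosh (2 * t)) / (√(2 * t) * cosh (2 * t))) *
      exp (-(1 / 2) * 1 * (sinh (2 * t) / cosh (2 * t)) * x ^ 2)))) := by
    refine Tendsto.const_mul _ (Tendsto.const_mul _ ((continuous_exp.tendsto _).comp ?_))
    exact ((hm.const_mul _).mul_const _).mul_const _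
  rw [tendsto_nhds_unique (hlim.congr fun n => integral_discrete hμ ht x n) hlim2]
  ring_nf

end
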